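/- Let L > 0 and let n be a positive integer, and set c* = 4n²/(5L²). Then the functions φ(x,y) = Q_{c*}(x)^{3/2}·cos(ny/L) and ψ(x,y) = Q_{c*}(x)^{3/2}·sin(ny/L) on ℝ² (which are 2πL-periodic in y) satisfy, for all (x,y) ∈ ℝ², -Δφ + c*·φ - 2·Q_{c*}(x)·φ = 0 and -Δψ + c*·ψ - 2·Q_{c*}(x)·ψ = 0, where Δ = ∂_x² + ∂_y². In particular φ and ψ lie in the kernel of ∂_x 𝕃_{c*} (the critical-speed kernel elements of Proposition 2.1(iv)). -/

import Mathlib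

/-!
The equation separates. Put `k = √c / 2`; then `Q_c ^ (3/2)` is a constant multiple of
`cosh (k x) ^ (-3)`, and `cosh² - sinh² = 1` gives
`(Q_c ^ (3/2))'' = (9c/4 - 2 Q_c) Q_c ^ (3/2)` (`deriv_deriv_Q_rpow`), so `Q_c ^ (3/2)` is an
eigenfunction of `-∂ₓ² + c - 2 Q_c` with eigenvalue `-5c/4`. A function `g` of `y` with
`g'' = -(5c/4) g` compensates this eigenvalue (`linearized_eq_zero`). For `c = 4n²/(5L²)` one has
`5c/4 = (n/L)²`, the square of the frequency of `cos (n y / L)` and `sin (n y / L)`. Applying `∂ₓ` to the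
identically vanishing function `𝕃_c φ` gives the last two claims.
-/

/-- The line solitary wave profile of the Zakharov--Kuznetsov equation:
`Q c x = (3c/2) * (cosh(√c·x/2))⁻²`. -/
noncomputable def Q (c x : ℝ) : ℝ := (3 * c / 2) * (Real.cosh (Real.sqrt c * x / 2) ^ 2)⁻¹

/-- The power `3/2` of the profile as an inverse cube, which avoids differentiating `Real.rpow`. -/
lemma Q_rpow_eq (c : ℝ) (hc : 0 < c) (x : ℝ) :
    (Q c x) ^ ((3 : ℝ) / 2) =
      (3 * c / 2) ^ ((3 : ℝ) / 2) * (Real.cosh (Real.sqrt c / 2 * x) ^ 3)⁻¹ := by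
  have hx : Real.sqrt c * x / 2 = Real.sqrt c / 2 * x := by ring
  have hC := Real.cosh_pos (Real.sqrt c / 2 * x)
  unfold Q
  rw [hx, Real.mul_rpow (by positivity) (by positivity), Real.inv_rpow (by positivity),
    ← Real.rpow_natCast _ 2, ← Real.rpow_mul hC.le, ← Real.rpow_natCast _ 3]
  norm_num

lemma hasDerivAt_cosh_mul (k x : ℝ) :
    HasDerivAt (fun s => Real.cosh (k * s)) (Real.sinh (k * x) * k) x := by
  simpa using ((hasDerivAt_id x).const_mul k).cosh

lemma hasDerivAt_sinh_mul (k x : ℝ) :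
    HasDerivAt (fun s => Real.sinh (k * s)) (Real.cosh (k * x) * k) x := by
  simpa using ((hasDerivAt_id x).const_mul k).sinh

/-- `Q_c ^ (3/2)` solves `u'' = (9c/4 - 2 Q_c) u`. -/
lemma deriv_deriv_Q_rpow (c : ℝ) (hc : 0 < c) (a x : ℝ) :
    deriv (deriv (fun s => (Q c s) ^ ((3 : ℝ) / 2) * a)) x =
      (9 * c / 4 - 2 * Q c x) * ((Q c x) ^ ((3 : ℝ) / 2) * a) := by
  have hx : Real.sqrt c * x / 2 = Real.sqrt c / 2 * x := by ring
  have hQ : Q c x = (3 * c / 2) * (Real.cosh (Real.sqrt c / 2 * x) ^ 2)⁻¹ := by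
    rw [Q, hx]
  simp only [Q_rpow_eq c hc]
  rw [hQ]
  generalize (3 * c / 2) ^ ((3 : ℝ) / 2) = K
  have hk : c = 4 * (Real.sqrt c / 2) ^ 2 := by
    rw [div_pow, Real.sq_sqrt hc.le]; ring
  generalize Real.sqrt c / 2 = k at *
  have hne : ∀ s, Real.cosh (k * s) ≠ 0 := fun s => (Real.cosh_pos _).ne'
  have h1 : deriv (fun s => K * (Real.cosh (k * s) ^ 3)⁻¹ * a) =
      fun s => -3 * k * K * a * (Real.sinh (k * s) * (Real.cosh (k * s) ^ 4)⁻¹) := by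
    funext s
    have h := (((((hasDerivAt_cosh_mul k s).pow 3).inv (pow_ne_zero 3 (hne s))).const_mul
      K).mul_const a).deriv
    refine h.trans ?_
    have := hne s
    simp only [Pi.pow_apply]
    field_simp
    norm_num
    ring
  rw [h1]
  have h2 := (((hasDerivAt_sinh_mul k x).mul
    (((hasDerivAt_cosh_mul k x).pow 4).inv (pow_ne_zero 4 (hne x)))).const_mul
      (-3 * k * K * a)).deriv
  refine h2.trans ?_
  have h0 := hne x
  have hs := Real.sinh_sq (k * x)
  rw [hk]
  simp only [Pi.pow_apply, Pi.inv_apply]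
  field_simp
  norm_num
  ring_nf
  rw [hs]
  ring

/-- A product `Q_c ^ (3/2) · g` lies in the kernel of `𝕃_c` as soon as `g'' = -(5c/4) g`. -/
lemma linearized_eq_zero (c : ℝ) (hc : 0 < c) (g : ℝ → ℝ)
    (hg : ∀ y, deriv (deriv g) y = -(5 * c / 4) * g y) (u : ℝ → ℝ → ℝ)
    (hu : ∀ x y, u x y = (Q c x) ^ ((3 : ℝ) / 2) * g y) (x y : ℝ) :
    -(deriv (deriv (fun s => u s y)) x + deriv (deriv (u x)) y)
      + c * u x y - 2 * Q c x * u x y = 0 := by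
  have h1 : (fun s => u s y) = fun s => (Q c s) ^ ((3 : ℝ) / 2) * g y := funext fun s => hu s y
  have h2 : u x = fun y => (Q c x) ^ ((3 : ℝ) / 2) * g y := funext (hu x)
  have h3 : deriv (fun y => (Q c x) ^ ((3 : ℝ) / 2) * g y) =
      fun y => (Q c x) ^ ((3 : ℝ) / 2) * deriv g y := funext fun y => deriv_const_mul_field _
  rw [h1, deriv_deriv_Q_rpow c hc, h2, h3, deriv_const_mul_field, hg]
  ring

lemma hasDerivAt_mul_div (a b y : ℝ) : HasDerivAt (fun s => a * s / b) (a / b) y := by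
  simpa using ((hasDerivAt_id y).const_mul a).div_const b

lemma deriv_cos_mul_div (a b : ℝ) :
    deriv (fun y => Real.cos (a * y / b)) = fun y => -(a / b) * Real.sin (a * y / b) := by
  funext y
  rw [(hasDerivAt_mul_div a b y).cos.deriv]
  ring

lemma deriv_sin_mul_div (a b : ℝ) :
    deriv (fun y => Real.sin (a * y / b)) = fun y => a / b * Real.cos (a * y / b) := by
  funext y
  rw [(hasDerivAt_mul_div a b y).sin.deriv]
  ring

/-- At critical speed `c* = 4n²/(5L²)`, the functions
`Q_{c*}^{3/2}·cos(ny/L)` and `Q_{c*}^{3/2}·sin(ny/L)` are `2πL`-periodic in `y`,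
lie in the kernel of `𝕃_{c*} = -Δ + c* - 2Q_{c*}`, and hence in the kernel of
`∂ₓ𝕃_{c*}` (extra kernel elements at critical speeds, Proposition 2.1(iv)). -/
theorem critical_speed_kernel_elements (L : ℝ) (hL : 0 < L) (n : ℕ) (hn : 0 < n)
    (cstar : ℝ) (hcs : cstar = 4 * (n : ℝ) ^ 2 / (5 * L ^ 2))
    (φ ψ : ℝ → ℝ → ℝ)
    (hφ : ∀ x y : ℝ, φ x y = (Q cstar x) ^ ((3 : ℝ) / 2) * Real.cos ((n : ℝ) * y / L))
    (hψ : ∀ x y : ℝ, ψ x y = (Q cstar x) ^ ((3 : ℝ) / 2) * Real.sin ((n : ℝ) * y / L)) :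
    (∀ x y : ℝ, φ x (y + 2 * Real.pi * L) = φ x y) ∧
    (∀ x y : ℝ, ψ x (y + 2 * Real.pi * L) = ψ x y) ∧
    (∀ x y : ℝ,
      -(deriv (deriv (fun s => φ s y)) x + deriv (deriv (φ x)) y)
        + cstar * φ x y - 2 * Q cstar x * φ x y = 0) ∧
    (∀ x y : ℝ,
      -(deriv (deriv (fun s => ψ s y)) x + deriv (deriv (ψ x)) y)
        + cstar * ψ x y - 2 * Q cstar x * ψ x y = 0) ∧
    (∀ x y : ℝ,
      deriv (fun s =>
        -(deriv (deriv (fun r => φ r y)) s + deriv (deriv (φ s)) y)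
          + cstar * φ s y - 2 * Q cstar s * φ s y) x = 0) ∧
    (∀ x y : ℝ,
      deriv (fun s =>
        -(deriv (deriv (fun r => ψ r y)) s + deriv (deriv (ψ s)) y)
          + cstar * ψ s y - 2 * Q cstar s * ψ s y) x = 0) := by
  have hn' : (0 : ℝ) < n := Nat.cast_pos.mpr hn
  have hc : 0 < cstar := by rw [hcs]; positivity
  have hfreq : 5 * cstar / 4 = ((n : ℝ) / L) ^ 2 := by rw [hcs]; field_simp
  have hshift : ∀ y : ℝ, (n : ℝ) * (y + 2 * Real.pi * L) / L
      = (n : ℝ) * y / L + n * (2 * Real.pi) := by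
    intro y; field_simp
  have hφ0 := linearized_eq_zero cstar hc (fun y => Real.cos ((n : ℝ) * y / L)) (fun y => by
    rw [deriv_cos_mul_div, deriv_const_mul_field, deriv_sin_mul_div, hfreq]; ring) φ hφ
  have hψ0 := linearized_eq_zero cstar hc (fun y => Real.sin ((n : ℝ) * y / L)) (fun y => by
    rw [deriv_sin_mul_div, deriv_const_mul_field, deriv_cos_mul_div, hfreq]; ring) ψ hψ
  refine ⟨fun x y => ?_, fun x y => ?_, hφ0, hψ0, fun x y => ?_, fun x y => ?_⟩
  · rw [hφ, hφ, hshift, Real.cos_add_nat_mul_two_pi]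
  · rw [hψ, hψ, hshift, Real.sin_add_nat_mul_two_pi]
  · simp only [hφ0, deriv_const]
  · simp only [hψ0, deriv_const]
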